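/- Let k ≥ 3 be an integer, 0 < θ ≤ 1, δ = x^{θ−1}, and Q = (δ·x^{k−2ρ})^{k/(2k−1)} with 0 < ρ < σ_k, where σ_k^{−1} = min(2^{k−1}, 2k(k−2)). Suppose α is real, a, q are integers with 1 ≤ q ≤ Q, gcd(a,q) = 1, |α − a/q| < 1/(qQ), and additionally q ≥ x^{2kρ} or |qα − a| ≥ δ^{−2}·x^{k−2kρ}. Then there is a constant C (depending only on k) such that w_k(q)^{1/2}·x^{θ}·(1 + δ²·x^k·|α − a/q|)^{−1/2} ≤ C·x^{θ−ρ}. -/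

import Mathlib

open scoped BigOperators

/-- The multiplicative function `w_k`, with `w_k(p^{ku+v}) = k p^{-u-1/2}` if `v = 1`
and `w_k(p^{ku+v}) = p^{-u-1}` if `2 ≤ v ≤ k` (where `u ≥ 0`, `1 ≤ v ≤ k`). -/
noncomputable def wk (k : ℕ) (n : ℕ) : ℝ :=
  ∏ p ∈ n.primeFactors,
    (if (n.factorization p - 1) % k = 0 then
      (k : ℝ) * (p : ℝ) ^ (-(((n.factorization p - 1) / k : ℕ) : ℝ) - 1 / 2)
    else
      (p : ℝ) ^ (-(((n.factorization p - 1) / k : ℕ) : ℝ) - 1))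

/-- `σ_k`, given by `σ_k⁻¹ = min(2^{k-1}, 2k(k-2))`. -/
noncomputable def sigmak (k : ℕ) : ℝ :=
  1 / min ((2 : ℝ) ^ (k - 1)) (2 * (k : ℝ) * ((k : ℝ) - 2))

/-!
Write `t = δ² xᵏ |α - a/q|`. Since `q t = δ² xᵏ |qα - a|`, lower bounds `x^(2kρ)` for `q` and
`δ⁻² x^(2kρ-k)` for `|qα - a|` both give `x^(2kρ) ≤ q (1 + t)`. As `w_k(q) ≪ q^(-1/k)` and
`(1 + t)⁻¹ ≤ (1 + t)^(-1/k)`, the product `w_k(q) (1 + t)⁻¹` is `≪ (q (1 + t))^(-1/k) ≤ x^(-2ρ)`,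
and one takes square roots. When `x ≥ 1` and `ρ ≤ 1/2`, a lower bound `δ⁻² x^(k-2kρ)` for `|qα - a|`
implies the bound `δ⁻² x^(2kρ-k)` used here.
-/

lemma prod_le_pow_card_mul_prod {ι R : Type*} [CommSemiring R] [PartialOrder R]
    [IsOrderedRing R] {s t : Finset ι} {f g : ι → R} {C : R} (hC : 1 ≤ C)
    (hf : ∀ i ∈ s, 0 ≤ f i) (hg : ∀ i ∈ s, 0 ≤ g i) (hfCg : ∀ i ∈ s, f i ≤ C * g i)
    (hfg : ∀ i ∈ s, i ∉ t → f i ≤ g i) :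
    ∏ i ∈ s, f i ≤ C ^ t.card * ∏ i ∈ s, g i := by
  classical
  have hf_le : ∀ i ∈ s, f i ≤ (if i ∈ t then C else 1) * g i := by
    intro i hi
    split_ifs with hit
    · exact hfCg i hi
    · rw [one_mul]
      exact hfg i hi hit
  calc ∏ i ∈ s, f i
      ≤ ∏ i ∈ s, (if i ∈ t then C else 1) * g i := Finset.prod_le_prod hf hf_le
    _ = C ^ (s ∩ t).card * ∏ i ∈ s, g i := by
        rw [Finset.prod_mul_distrib, Finset.prod_ite_mem, Finset.prod_const]
    _ ≤ C ^ t.card * ∏ i ∈ s, g i :=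
        mul_le_mul_of_nonneg_right
          (pow_le_pow_right₀ hC (Finset.card_le_card Finset.inter_subset_right))
          (Finset.prod_nonneg hg)

lemma prod_primeFactors_rpow {n : ℕ} (hn : n ≠ 0) (s : ℝ) :
    ∏ p ∈ n.primeFactors, ((p : ℝ) ^ n.factorization p) ^ s = (n : ℝ) ^ s := by
  rw [Real.finsetProd_rpow _ _ fun p _ => by positivity]
  congr 1
  exact_mod_cast Nat.prod_factorization_pow_eq_self hn

lemma rpow_neg_mul_inv_le_rpow_neg {q t y s : ℝ} (hq : 0 < q) (ht : 0 ≤ t) (hy : 0 < y)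
    (hs₀ : 0 ≤ s) (hs₁ : s ≤ 1) (h : y ≤ q * (1 + t)) :
    q ^ (-s) * (1 + t)⁻¹ ≤ y ^ (-s) := by
  have h_inv : (1 + t)⁻¹ ≤ (1 + t) ^ (-s) := by
    rw [← Real.rpow_neg_one]
    exact Real.rpow_le_rpow_of_exponent_le (by linarith) (by linarith)
  calc q ^ (-s) * (1 + t)⁻¹
      ≤ q ^ (-s) * (1 + t) ^ (-s) := mul_le_mul_of_nonneg_left h_inv (by positivity)
    _ = (q * (1 + t)) ^ (-s) := (Real.mul_rpow hq.le (by linarith)).symm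
    _ ≤ y ^ (-s) := Real.rpow_le_rpow_of_nonpos hy h (by linarith)

/-- The value `w_k(p ^ e)` at a prime power with `e ≥ 1`. Writing `e = ku + v` with `1 ≤ v ≤ k`,
we have `u = (e - 1) / k` and `v - 1 = (e - 1) % k`. -/
noncomputable def wkPrimePow (k p e : ℕ) : ℝ :=
  if (e - 1) % k = 0 then
    (k : ℝ) * (p : ℝ) ^ (-(((e - 1) / k : ℕ) : ℝ) - 1 / 2)
  else
    (p : ℝ) ^ (-(((e - 1) / k : ℕ) : ℝ) - 1)

lemma wk_eq_prod_wkPrimePow (k n : ℕ) :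
    wk k n = ∏ p ∈ n.primeFactors, wkPrimePow k p (n.factorization p) :=
  rfl

lemma wkPrimePow_nonneg (k p e : ℕ) : 0 ≤ wkPrimePow k p e := by
  unfold wkPrimePow
  split_ifs <;> positivity

lemma wk_nonneg (k n : ℕ) : 0 ≤ wk k n :=
  Finset.prod_nonneg fun p _ => wkPrimePow_nonneg k p _

lemma wkPrimePow_of_mod_eq_zero {k p e : ℕ} (hk : k ≠ 0) (hp : 0 < p) (he : e ≠ 0)
    (h : (e - 1) % k = 0) :
    wkPrimePow k p e =
      k * (p : ℝ) ^ ((k : ℝ)⁻¹ - 1 / 2) * ((p : ℝ) ^ e) ^ (-(k : ℝ)⁻¹) := by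
  have he_eq : (e : ℝ) = k * ((e - 1) / k : ℕ) + 1 := by
    have := Nat.div_add_mod (e - 1) k
    exact_mod_cast (by omega : e = k * ((e - 1) / k) + 1)
  have hp₀ : (0 : ℝ) < p := by exact_mod_cast hp
  rw [wkPrimePow, if_pos h, mul_assoc, ← Real.rpow_natCast_mul hp₀.le, ← Real.rpow_add hp₀, he_eq]
  congr 2
  field_simp
  ring

lemma wkPrimePow_le_of_mod_ne_zero {k p e : ℕ} (hk : k ≠ 0) (hp : 0 < p)
    (h : (e - 1) % k ≠ 0) :
    wkPrimePow k p e ≤ ((p : ℝ) ^ e) ^ (-(k : ℝ)⁻¹) := by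
  have he_le : (e : ℝ) ≤ (((e - 1) / k : ℕ) + 1) * k := by
    have := Nat.lt_div_mul_add (a := e - 1) (Nat.pos_of_ne_zero hk)
    exact_mod_cast (by rw [add_one_mul]; omega : e ≤ ((e - 1) / k + 1) * k)
  rw [wkPrimePow, if_neg h, ← Real.rpow_natCast_mul (by positivity)]
  refine Real.rpow_le_rpow_of_exponent_le (by exact_mod_cast hp) ?_
  rw [← div_le_iff₀ (by positivity), div_eq_mul_inv] at he_le
  linarith

lemma wkPrimePow_le {k p e : ℕ} (hk : k ≠ 0) (hp : 0 < p) (he : e ≠ 0) :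
    wkPrimePow k p e ≤
      max 1 (k * (p : ℝ) ^ ((k : ℝ)⁻¹ - 1 / 2)) * ((p : ℝ) ^ e) ^ (-(k : ℝ)⁻¹) := by
  by_cases h : (e - 1) % k = 0
  · rw [wkPrimePow_of_mod_eq_zero hk hp he h]
    exact mul_le_mul_of_nonneg_right (le_max_right _ _) (by positivity)
  · exact (wkPrimePow_le_of_mod_ne_zero hk hp h).trans
      (le_mul_of_one_le_left (by positivity) (le_max_left _ _))

lemma max_one_mul_rpow_le {k p : ℕ} (hk : 2 ≤ k) (hp : 0 < p) :
    max 1 (k * (p : ℝ) ^ ((k : ℝ)⁻¹ - 1 / 2)) ≤ k := by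
  have hk_inv : (k : ℝ)⁻¹ ≤ 1 / 2 := by
    rw [one_div]
    exact inv_anti₀ two_pos (by exact_mod_cast hk)
  have hp_rpow : (p : ℝ) ^ ((k : ℝ)⁻¹ - 1 / 2) ≤ 1 :=
    Real.rpow_le_one_of_one_le_of_nonpos (by exact_mod_cast hp) (by linarith)
  exact max_le (by exact_mod_cast one_le_two.trans hk)
    (mul_le_of_le_one_right (by positivity) hp_rpow)

lemma max_one_mul_rpow_le_one {k p : ℕ} (hk : 3 ≤ k) (hp : k ^ 6 ≤ p) :
    max 1 (k * (p : ℝ) ^ ((k : ℝ)⁻¹ - 1 / 2)) ≤ 1 := by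
  have hk₀ : (0 : ℝ) < k := by positivity
  have hk_inv : (k : ℝ)⁻¹ ≤ 1 / 3 := by
    rw [one_div]
    exact inv_anti₀ three_pos (by exact_mod_cast hk)
  have hp' : (k : ℝ) ^ 6 ≤ p := by exact_mod_cast hp
  have hp_one : (1 : ℝ) ≤ p := (one_le_pow₀ (by exact_mod_cast (by omega : 1 ≤ k))).trans hp'
  refine max_le le_rfl ?_
  calc (k : ℝ) * (p : ℝ) ^ ((k : ℝ)⁻¹ - 1 / 2)
      ≤ k * (p : ℝ) ^ (-(1 / 6) : ℝ) := by gcongr; linarith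
    _ ≤ k * ((k : ℝ) ^ 6) ^ (-(1 / 6) : ℝ) :=
        mul_le_mul_of_nonneg_left
          (Real.rpow_le_rpow_of_nonpos (by positivity) hp' (by norm_num)) hk₀.le
    _ = k * (k : ℝ)⁻¹ := by
        rw [← Real.rpow_natCast_mul hk₀.le, ← Real.rpow_neg_one]
        norm_num
    _ = 1 := mul_inv_cancel₀ hk₀.ne'

lemma wkPrimePow_le_mul {k p e : ℕ} (hk : 2 ≤ k) (hp : 0 < p) (he : e ≠ 0) :
    wkPrimePow k p e ≤ k * ((p : ℝ) ^ e) ^ (-(k : ℝ)⁻¹) :=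
  (wkPrimePow_le (by omega) hp he).trans
    (mul_le_mul_of_nonneg_right (max_one_mul_rpow_le hk hp) (by positivity))

lemma wkPrimePow_le_of_pow_six_le {k p e : ℕ} (hk : 3 ≤ k) (hp : k ^ 6 ≤ p) (he : e ≠ 0) :
    wkPrimePow k p e ≤ ((p : ℝ) ^ e) ^ (-(k : ℝ)⁻¹) :=
  (wkPrimePow_le (by omega) (lt_of_lt_of_le (by positivity) hp) he).trans
    (mul_le_of_le_one_left (by positivity) (max_one_mul_rpow_le_one hk hp))

lemma wk_le {k q : ℕ} (hk : 3 ≤ k) (hq : q ≠ 0) :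
    wk k q ≤ (k : ℝ) ^ k ^ 6 * (q : ℝ) ^ (-(k : ℝ)⁻¹) := by
  have he : ∀ p ∈ q.primeFactors, q.factorization p ≠ 0 :=
    fun p hp => Finsupp.mem_support_iff.mp hp
  rw [wk_eq_prod_wkPrimePow, ← prod_primeFactors_rpow hq, ← Finset.card_range (k ^ 6)]
  refine prod_le_pow_card_mul_prod (by exact_mod_cast (by omega : 1 ≤ k))
    (fun p _ => wkPrimePow_nonneg k p _) (fun p _ => by positivity) ?_ ?_
  · intro p hp
    exact wkPrimePow_le_mul (by omega) (Nat.pos_of_mem_primeFactors hp) (he p hp)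
  · intro p hp hp_range
    exact wkPrimePow_le_of_pow_six_le hk (by simpa using hp_range) (he p hp)

lemma wk_mul_inv_one_add_le {k q : ℕ} (hk : 3 ≤ k) (hq : q ≠ 0) {t y : ℝ} (ht : 0 ≤ t)
    (hy : 0 < y) (h : y ≤ q * (1 + t)) :
    wk k q * (1 + t)⁻¹ ≤ (k : ℝ) ^ k ^ 6 * y ^ (-(k : ℝ)⁻¹) := by
  calc wk k q * (1 + t)⁻¹
      ≤ (k : ℝ) ^ k ^ 6 * (q : ℝ) ^ (-(k : ℝ)⁻¹) * (1 + t)⁻¹ :=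
        mul_le_mul_of_nonneg_right (wk_le hk hq) (by positivity)
    _ = (k : ℝ) ^ k ^ 6 * ((q : ℝ) ^ (-(k : ℝ)⁻¹) * (1 + t)⁻¹) := mul_assoc _ _ _
    _ ≤ (k : ℝ) ^ k ^ 6 * y ^ (-(k : ℝ)⁻¹) :=
        mul_le_mul_of_nonneg_left
          (rpow_neg_mul_inv_le_rpow_neg (by positivity) ht hy (by positivity)
            (Nat.cast_inv_le_one k) h)
          (by positivity)

lemma le_mul_one_add_of_le_or_le {q D y α a : ℝ} (hq : 0 < q) (hD : 0 < D)
    (h : y ≤ q ∨ D⁻¹ * y ≤ |q * α - a|) : y ≤ q * (1 + D * |α - a / q|) := by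
  have h_dist : |q * α - a| = q * |α - a / q| := by
    rw [← abs_of_pos hq, ← abs_mul, abs_of_pos hq, mul_sub, mul_div_cancel₀ a hq.ne']
  rcases h with h | h
  · exact h.trans (le_mul_of_one_le_right hq.le (le_add_of_nonneg_right (by positivity)))
  · rw [inv_mul_le_iff₀ hD, h_dist] at h
    linarith

lemma wk_rpow_half_mul_le {k q : ℕ} (hk : 3 ≤ k) (hq : q ≠ 0) {x ρ t : ℝ} (hx : 0 < x) (ht : 0 ≤ t)
    (h : x ^ (2 * (k : ℝ) * ρ) ≤ q * (1 + t)) :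
    wk k q ^ ((1 : ℝ) / 2) * (1 + t) ^ (-(1 : ℝ) / 2) ≤
      ((k : ℝ) ^ k ^ 6) ^ ((1 : ℝ) / 2) * x ^ (-ρ) := by
  have hk₀ : (k : ℝ) ≠ 0 := by positivity
  calc wk k q ^ ((1 : ℝ) / 2) * (1 + t) ^ (-(1 : ℝ) / 2)
      = (wk k q * (1 + t)⁻¹) ^ ((1 : ℝ) / 2) := by
        rw [Real.mul_rpow (wk_nonneg k q) (by positivity), Real.inv_rpow (by positivity),
          ← Real.rpow_neg (by positivity), neg_div]
    _ ≤ ((k : ℝ) ^ k ^ 6 * (x ^ (2 * (k : ℝ) * ρ)) ^ (-(k : ℝ)⁻¹)) ^ ((1 : ℝ) / 2) :=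
        Real.rpow_le_rpow (mul_nonneg (wk_nonneg k q) (by positivity))
          (wk_mul_inv_one_add_le hk hq ht (by positivity) h) (by norm_num)
    _ = ((k : ℝ) ^ k ^ 6) ^ ((1 : ℝ) / 2) * x ^ (-ρ) := by
        rw [Real.mul_rpow (by positivity) (by positivity), ← Real.rpow_mul hx.le,
          ← Real.rpow_mul hx.le]
        congr 2
        field_simp

lemma sigmak_le_one_quarter {k : ℕ} (hk : 3 ≤ k) : sigmak k ≤ 1 / 4 := by
  have hk' : (3 : ℝ) ≤ k := by exact_mod_cast hk
  have h_pow : (4 : ℝ) ≤ 2 ^ (k - 1) :=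
    calc (4 : ℝ) = 2 ^ 2 := by norm_num
      _ ≤ 2 ^ (k - 1) := pow_le_pow_right₀ one_le_two (by omega)
  have h_quad : (4 : ℝ) ≤ 2 * k * (k - 2) := by nlinarith
  exact one_div_le_one_div_of_le four_pos (le_min h_pow h_quad)

lemma rpow_sub_le_rpow_sub_of_le_sigmak {k : ℕ} (hk : 3 ≤ k) {x ρ : ℝ} (hx : 1 ≤ x)
    (hρ : ρ ≤ sigmak k) :
    x ^ (2 * (k : ℝ) * ρ - k) ≤ x ^ ((k : ℝ) - 2 * k * ρ) := by
  have hρ_half : ρ ≤ 1 / 2 := by linarith [sigmak_le_one_quarter hk]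
  have hkρ : (k : ℝ) * ρ ≤ k * (1 / 2) := mul_le_mul_of_nonneg_left hρ_half k.cast_nonneg
  exact Real.rpow_le_rpow_of_exponent_le hx (by linarith)

theorem major_arc_term_small_general (k : ℕ) (hk : 3 ≤ k) :
    ∃ C > 0, ∀ θ ρ x α a : ℝ, ∀ q : ℕ, 0 < x → 1 ≤ q →
      (x ^ (2 * (k : ℝ) * ρ) ≤ (q : ℝ) ∨
        (x ^ (θ - 1))⁻¹ ^ 2 * x ^ (2 * (k : ℝ) * ρ - (k : ℝ)) ≤ |(q : ℝ) * α - a|) →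
      wk k q ^ ((1 : ℝ) / 2) * x ^ θ *
          (1 + (x ^ (θ - 1)) ^ 2 * x ^ (k : ℝ) * |α - a / (q : ℝ)|) ^ (-(1 : ℝ) / 2) ≤
        C * x ^ (θ - ρ) := by
  refine ⟨((k : ℝ) ^ k ^ 6) ^ ((1 : ℝ) / 2), by positivity, ?_⟩
  intro θ ρ x α a q hx hq h
  set D := (x ^ (θ - 1)) ^ 2 * x ^ (k : ℝ) with hD
  have h_threshold : (x ^ (θ - 1))⁻¹ ^ 2 * x ^ (2 * (k : ℝ) * ρ - k) =
      D⁻¹ * x ^ (2 * (k : ℝ) * ρ) := by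
    rw [hD, Real.rpow_sub hx _ (k : ℝ), mul_inv, inv_pow]
    ring
  rw [h_threshold] at h
  have h_half := wk_rpow_half_mul_le hk (by omega) hx (by positivity : 0 ≤ D * |α - a / q|)
    (le_mul_one_add_of_le_or_le (by positivity) (by positivity) h)
  calc wk k q ^ ((1 : ℝ) / 2) * x ^ θ * (1 + D * |α - a / q|) ^ (-(1 : ℝ) / 2)
      = wk k q ^ ((1 : ℝ) / 2) * (1 + D * |α - a / q|) ^ (-(1 : ℝ) / 2) * x ^ θ :=
        mul_right_comm _ _ _
    _ ≤ ((k : ℝ) ^ k ^ 6) ^ ((1 : ℝ) / 2) * x ^ (-ρ) * x ^ θ :=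
        mul_le_mul_of_nonneg_right h_half (by positivity)
    _ = ((k : ℝ) ^ k ^ 6) ^ ((1 : ℝ) / 2) * x ^ (θ - ρ) := by
        rw [mul_assoc, ← Real.rpow_add hx, neg_add_eq_sub]

theorem major_arc_term_small (k : ℕ) (hk : 3 ≤ k) :
    ∃ C > 0, ∀ θ ρ x α : ℝ, ∀ a : ℤ, ∀ q : ℕ,
      0 < θ → θ ≤ 1 → 0 < ρ → ρ < sigmak k → 1 ≤ x →
      1 ≤ q →
      (q : ℝ) ≤ (x ^ (θ - 1) * x ^ ((k : ℝ) - 2 * ρ)) ^ ((k : ℝ) / (2 * (k : ℝ) - 1)) →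
      Int.gcd a (q : ℤ) = 1 →
      |α - (a : ℝ) / (q : ℝ)| <
        1 / ((q : ℝ) * (x ^ (θ - 1) * x ^ ((k : ℝ) - 2 * ρ)) ^ ((k : ℝ) / (2 * (k : ℝ) - 1))) →
      (x ^ (2 * (k : ℝ) * ρ) ≤ (q : ℝ) ∨
        (x ^ (θ - 1))⁻¹ ^ 2 * x ^ ((k : ℝ) - 2 * (k : ℝ) * ρ) ≤ |(q : ℝ) * α - (a : ℝ)|) →
      wk k q ^ ((1 : ℝ) / 2) * x ^ θ *
          (1 + (x ^ (θ - 1)) ^ 2 * x ^ (k : ℝ) * |α - (a : ℝ) / (q : ℝ)|) ^ (-(1 : ℝ) / 2) ≤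
        C * x ^ (θ - ρ) := by
  obtain ⟨C, hC, h⟩ := major_arc_term_small_general k hk
  exact ⟨C, hC, fun θ ρ x α a q _ _ _ hρ hx hq _ _ _ h_or =>
    h θ ρ x α a q (by linarith) hq (h_or.imp_right (mul_le_mul_of_nonneg_left
      (rpow_sub_le_rpow_sub_of_le_sigmak hk hx hρ.le) (by positivity)).trans)⟩
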